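/- Suppose the finitely supported functions f_I, f_J, f_K : P × ℤ_{>0} → ℕ and the generic parameter m₀ witness the relevance of parameters m and m', i.e. f_I + f_J + f_K = m, f_K(η,a) = 0 whenever η ∈ P_disc, and m'(η,a) = f_I(η,a−1) + f_J(η,a+1) + f_K(D(η),a) + m₀(η,a) for all η and a ≥ 1 (with f_I(η,0) read as 0). Then for every η ∈ P_cmpl and every a ∈ ℤ_{>0}, Λ(η,a;m,m') = f_J(η,a) + f_K(η,a) + f_J(D(η), a+1). -/

import Mathlib

/-!
For `η ∈ P_cmpl` the sum defining `Λ` telescopes. Write `ηₖ = D^k η` and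
`g k = f_J(ηₖ, a+k) + f_K(ηₖ, a+k) + f_J(ηₖ₊₁, a+k+1)`. In the `k`-th summand the `f_I`
contributions cancel and `m₀` does not contribute, being generic and evaluated at `a+k+1 ≥ 2`; as
`D` is an involution, `f_J(ηₖ, a+k+2) = f_J(ηₖ₊₂, a+k+2)`, so the summand is `g k - g (k+1)`.
By finite support `g` is eventually zero, and the sum equals `g 0`.
-/

open scoped Classical

/-- A parameter: a finitely supported multiplicity function on `P × ℤ_{>0}`,
encoded as a function on `P × ℕ` vanishing at index `0`. -/
structure Param (P : Type*) where
  m : P → ℕ → ℕ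
  zero : ∀ η, m η 0 = 0
  finite : {p : P × ℕ | m p.1 p.2 ≠ 0}.Finite

/-- A parameter is generic if all multiplicities with `a ≥ 2` vanish. -/
def Param.Generic {P : Type*} (m : Param P) : Prop :=
  ∀ η a, 2 ≤ a → m.m η a = 0

/-- The alternating sum `Λ(η, a; m, m')`: for `η ∈ P_disc` it is
`Σ_{k ≥ 0} (m(η, a+2k) - m'(η, a+2k+1))`, and for `η ∈ P_cmpl` (the complement)
it is `Σ_{k ≥ 0} (m(D^k η, a+k) - m'(D^k η, a+k+1))`. -/
noncomputable def Lam {P : Type*} (Pdisc : Set P) (D : P → P)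
    (m m' : Param P) (η : P) (a : ℕ) : ℤ :=
  if η ∈ Pdisc then
    ∑ᶠ k : ℕ, ((m.m η (a + 2 * k) : ℤ) - (m'.m η (a + 2 * k + 1) : ℤ))
  else
    ∑ᶠ k : ℕ, ((m.m (D^[k] η) (a + k) : ℤ) - (m'.m (D^[k] η) (a + k + 1) : ℤ))

/-- Parameters `m` and `m'` are relevant: there are finitely supported functions
`f_I, f_J, f_K` and a generic parameter `m₀` with `f_I + f_J + f_K = m`,
`f_K` vanishing on `P_disc`, and
`m'(η,a) = f_I(η,a-1) + f_J(η,a+1) + f_K(D η,a) + m₀(η,a)` for all `η` and `a ≥ 1`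
(where `f_I(η,0)` is read as `0`). -/
def Relevant {P : Type*} (Pdisc : Set P) (D : P → P) (m m' : Param P) : Prop :=
  ∃ fI fJ fK m₀ : Param P, m₀.Generic ∧
    (∀ η a, fI.m η a + fJ.m η a + fK.m η a = m.m η a) ∧
    (∀ η ∈ Pdisc, ∀ a, fK.m η a = 0) ∧
    (∀ η a, 1 ≤ a →
      m'.m η a = fI.m η (a - 1) + fJ.m η (a + 1) + fK.m (D η) a + m₀.m η a)

theorem Param.exists_bound {P : Type*} (m : Param P) :
    ∃ N, ∀ η a, N ≤ a → m.m η a = 0 := by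
  obtain ⟨N, hN⟩ := (m.finite.image Prod.snd).bddAbove
  refine ⟨N + 1, fun η a ha => ?_⟩
  by_contra h
  have : a ≤ N := hN ⟨(η, a), h, rfl⟩
  omega

theorem finsum_telescope (g : ℕ → ℤ) (N : ℕ) (hg : ∀ k, N ≤ k → g k = 0) :
    ∑ᶠ k, (g k - g (k + 1)) = g 0 := by
  rw [finsum_eq_sum_of_support_subset (s := Finset.range N), Finset.sum_range_sub', hg N le_rfl,
    sub_zero]
  intro k hk
  by_contra h
  have hNk : N ≤ k := by simpa using h
  exact hk (by simp [hg k hNk, hg (k + 1) (by omega)])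

/-- if `f_I, f_J, f_K, m₀` witness the relevance of `m` and `m'`,
then `Λ(η,a;m,m') = f_J(η,a) + f_K(η,a) + f_J(D η, a+1)` for every
`η ∈ P_cmpl` and `a ≥ 1`. -/
theorem lambda_eq_of_witness_cmpl {P : Type*} (Pdisc : Set P) (D : P → P)
    (hD1 : ∀ η ∈ Pdisc, D η = η)
    (hD2 : ∀ η ∉ Pdisc, D η ∉ Pdisc)
    (hD3 : ∀ η, D (D η) = η)
    (m m' fI fJ fK m₀ : Param P)
    (hgen : m₀.Generic)
    (hsum : ∀ η a, fI.m η a + fJ.m η a + fK.m η a = m.m η a)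
    (hK : ∀ η ∈ Pdisc, ∀ a, fK.m η a = 0)
    (hm' : ∀ η a, 1 ≤ a →
      m'.m η a = fI.m η (a - 1) + fJ.m η (a + 1) + fK.m (D η) a + m₀.m η a) :
    ∀ η ∉ Pdisc, ∀ a : ℕ, 1 ≤ a →
      Lam Pdisc D m m' η a
        = (fJ.m η a : ℤ) + (fK.m η a : ℤ) + (fJ.m (D η) (a + 1) : ℤ) := by
  intro η hη a ha
  obtain ⟨NJ, hNJ⟩ := fJ.exists_bound
  obtain ⟨NK, hNK⟩ := fK.exists_bound
  let g : ℕ → ℤ := fun k => (fJ.m (D^[k] η) (a + k) : ℤ) + (fK.m (D^[k] η) (a + k) : ℤ)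
    + (fJ.m (D (D^[k] η)) (a + k + 1) : ℤ)
  have hg : ∀ k, NJ + NK ≤ k → g k = 0 := fun k hk => by
    simp only [g]
    rw [hNJ _ _ (by omega), hNK _ _ (by omega), hNJ _ _ (by omega)]
    simp
  rw [Lam, if_neg hη]
  trans ∑ᶠ k, (g k - g (k + 1))
  · refine finsum_congr fun k => ?_
    simp only [g, Function.iterate_succ_apply', hD3]
    rw [← hsum, hm' _ _ (by omega), hgen _ _ (by omega)]
    simp only [Nat.add_sub_cancel, ← add_assoc]
    push_cast
    ring
  · simpa [g] using finsum_telescope g _ hg
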